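/- Let n = dim A1 and assume the n-space-tuple Ramsey theorem holds for vector spaces over GF(2). Let A be a finite-dimensional subspace of V with A1 < A. Then for every r ∈ ℕ and every finite-dimensional subspace B ∈ K_{A1} with A ≤ B, there exists a finite-dimensional subspace C ∈ K_{A1} such that for every coloring ξ : {U ≤ C : π(U) = A1 and dim U = dim A} → {0, ..., r−1} there exists a subspace B' ≤ C with π(B') = A1 and dim B' = dim B such that ξ is constant on the set {U ≤ B' : π(U) = A1 and dim U = dim A}. -/

import Mathlib

open Module Submodule

/-- The coset `U + v` of a subspace `U`, as a subset. -/
def coset {X : Type*} [AddCommGroup X] [Module (ZMod 2) X]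
    (U : Submodule (ZMod 2) X) (v : X) : Set X :=
  {x | x - v ∈ U}

/-- `(U + v 0, ..., U + v (n-1))` is an `n`-space-tuple based on `U`: the vectors
`v 0, ..., v (n-1)` are linearly independent over `U`, i.e. their images in `X ⧸ U` are
linearly independent. -/
def IsSpaceTuple {X : Type*} [AddCommGroup X] [Module (ZMod 2) X]
    {n : ℕ} (U : Submodule (ZMod 2) X) (v : Fin n → X) : Prop :=
  LinearIndependent (ZMod 2) (fun i => (Submodule.Quotient.mk (v i) : X ⧸ U))

/-- The `n`-space-tuple Ramsey theorem over `GF(2)`: for all `t < k` and all `r` there is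
`m` such that in every `m`-dimensional `GF(2)`-vector space `X`, every `r`-coloring of the
`n`-space-tuples based on `t`-dimensional subspaces admits an `n`-space-tuple
`(W + w 0, ..., W + w (n-1))` with `dim W = k` all of whose `n`-space-subtuples based on
`t`-dimensional subspaces get the same color. -/
def TupleRamsey (n : ℕ) : Prop :=
  ∀ t k r : ℕ, t < k → ∃ m : ℕ,
    ∀ (X : Type) [AddCommGroup X] [Module (ZMod 2) X],
      Module.finrank (ZMod 2) X = m →
      ∀ ξ : (Fin n → Set X) → Fin r,
        ∃ (W : Submodule (ZMod 2) X) (w : Fin n → X),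
          Module.finrank (ZMod 2) W = k ∧ IsSpaceTuple W w ∧
          ∀ (U : Submodule (ZMod 2) X) (v : Fin n → X)
            (U' : Submodule (ZMod 2) X) (v' : Fin n → X),
            Module.finrank (ZMod 2) U = t → IsSpaceTuple U v →
            Module.finrank (ZMod 2) U' = t → IsSpaceTuple U' v' →
            (∀ i, coset U (v i) ⊆ coset W (w i)) →
            (∀ i, coset U' (v' i) ⊆ coset W (w i)) →
            ξ (fun i => coset U (v i)) = ξ (fun i => coset U' (v' i))

/-!
Splitting `V` along `π` reduces to the subspaces of `X × E` projecting onto `E`, where `E` is the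
range of `π` and `X = Kᵐ`. Such a subspace is a union of slices `(U + f e) × {e}`, where `U` is a
subspace of `X` and `f : E → X` is linear. It is thus determined by the cosets `U + f (b i)` for a
basis `b` of `E` if `E ≠ 0`, and inclusions between such subspaces are inclusions of these cosets,
so that the tuple Ramsey theorem for `X` applies.

If `E = 0`, a tuple indexed by a basis of `E` is empty and does not see its base space. What is
needed is the Graham–Leeb–Rothschild theorem for `t`-dimensional subspaces over a finite field,
which holds by induction on `t` and on the target dimensions. The Hales–Jewett theorem provides a
line `L` such that the color of a subspace meeting `L` trivially depends only on its image modulo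
`L`, while the subspaces containing `L` correspond to the `(t - 1)`-dimensional subspaces of a
complement of `L`.
-/

universe u v w

section Dimension

variable {K X Y Z : Type*} [Field K] [AddCommGroup X] [Module K X] [AddCommGroup Y] [Module K Y]
  [AddCommGroup Z] [Module K Z]

theorem finrank_map_of_injective {f : X →ₗ[K] Y} (hf : Function.Injective f) (U : Submodule K X) :
    finrank K (U.map f) = finrank K U :=
  (equivMapOfInjective f hf U).finrank_eq.symm

theorem exists_injective_linearMap_range_le {H : Submodule K X} {n : ℕ} (hn : n ≤ finrank K H) :
    ∃ f : (Fin n → K) →ₗ[K] X, Function.Injective f ∧ LinearMap.range f ≤ H := by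
  obtain ⟨x, hx⟩ := exists_linearIndependent_of_le_finrank hn
  refine ⟨H.subtype ∘ₗ Fintype.linearCombination K x, ?_, ?_⟩
  · exact H.injective_subtype.comp hx.fintypeLinearCombination_injective
  · exact (LinearMap.range_comp_le_range _ _).trans_eq H.range_subtype

theorem exists_le_finrank_eq {H : Submodule K X} {n : ℕ} (hn : n ≤ finrank K H) :
    ∃ W ≤ H, finrank K W = n := by
  obtain ⟨f, hf, hfH⟩ := exists_injective_linearMap_range_le hn
  exact ⟨LinearMap.range f, hfH, by rw [LinearMap.finrank_range_of_inj hf, finrank_fin_fun]⟩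

theorem finrank_sup_of_disjoint {U W : Submodule K X} [FiniteDimensional K U]
    [FiniteDimensional K W] (h : Disjoint U W) :
    finrank K ↥(U ⊔ W) = finrank K U + finrank K W := by
  rw [← finrank_sup_add_finrank_inf_eq, h.eq_bot, finrank_bot, add_zero]

theorem exists_eq_map_graph_of_disjoint_ker_fst {T : Submodule K (Y × Z)}
    (hT : Disjoint T (LinearMap.ker (LinearMap.fst K Y Z))) :
    ∃ a : Y →ₗ[K] Z, T = (T.map (LinearMap.fst K Y Z)).map (LinearMap.id.prod a) := by
  have hker : LinearMap.ker (LinearMap.fst K Y Z ∘ₗ T.subtype) = ⊥ := by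
    rwa [LinearMap.ker_comp, ← disjoint_iff_comap_eq_bot]
  obtain ⟨g, hg⟩ := LinearMap.exists_leftInverse_of_injective _ hker
  refine ⟨LinearMap.snd K Y Z ∘ₗ T.subtype ∘ₗ g, ?_⟩
  have hgraph : (LinearMap.id.prod (LinearMap.snd K Y Z ∘ₗ T.subtype ∘ₗ g) ∘ₗ
      LinearMap.fst K Y Z) ∘ₗ T.subtype = T.subtype := by
    ext x
    · rfl
    · exact congrArg (fun y : T => (y : Y × Z).2) (LinearMap.congr_fun hg x)
  rw [← Submodule.map_comp]
  conv_lhs => rw [← T.range_subtype, ← hgraph, LinearMap.range_comp, T.range_subtype]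

end Dimension

section SubspaceRamsey

variable {K : Type u} [Field K] {κ : Type w}

/-- All `t`-dimensional subspaces of `W` have color `i` under `c`. -/
def IsMonochromatic {X : Type*} [AddCommGroup X] [Module K X] (c : Submodule K X → κ) (t : ℕ)
    (W : Submodule K X) (i : κ) : Prop :=
  ∀ U ≤ W, finrank K U = t → c U = i

/-- On the subspaces of `Z` meeting `L` trivially, the color of `T` depends only on `T ⊔ L`, that
is, on the image of `T` in the quotient by `L`. -/
def IsColoredModulo {X : Type*} [AddCommGroup X] [Module K X] (c : Submodule K X → κ)
    (Z L : Submodule K X) : Prop :=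
  ∀ T ≤ Z, ∀ T' ≤ Z, Disjoint T L → Disjoint T' L → T ⊔ L = T' ⊔ L → c T = c T'

theorem IsColoredModulo.mono {X : Type*} [AddCommGroup X] [Module K X] {c : Submodule K X → κ}
    {Z Z' L : Submodule K X} (hc : IsColoredModulo c Z L) (h : Z' ≤ Z) : IsColoredModulo c Z' L :=
  fun T hT T' hT' => hc T (hT.trans h) T' (hT'.trans h)

theorem IsColoredModulo.map {X Y : Type*} [AddCommGroup X] [Module K X] [AddCommGroup Y]
    [Module K Y] {ψ : Y →ₗ[K] X} (hψ : Function.Injective ψ) {c : Submodule K X → κ}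
    {Z L : Submodule K Y} (hc : IsColoredModulo (fun S => c (S.map ψ)) Z L) :
    IsColoredModulo c (Z.map ψ) (L.map ψ) := by
  have hlift : ∀ T ≤ Z.map ψ, Disjoint T (L.map ψ) → ∃ S ≤ Z, Disjoint S L ∧ S.map ψ = T := by
    intro T hT hTL
    have hmap : (T.comap ψ).map ψ = T := map_comap_eq_self (hT.trans LinearMap.map_le_range)
    refine ⟨T.comap ψ, ?_, ?_, hmap⟩
    · rwa [← map_le_map_iff_of_injective hψ, hmap]
    · rw [disjoint_iff]
      apply map_injective_of_injective hψ
      rw [Submodule.map_inf _ hψ, hmap, hTL.eq_bot, Submodule.map_bot]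
  intro T hT T' hT' hTL hTL' hsup
  obtain ⟨S, hS, hSL, rfl⟩ := hlift T hT hTL
  obtain ⟨S', hS', hSL', rfl⟩ := hlift T' hT' hTL'
  rw [← Submodule.map_sup, ← Submodule.map_sup] at hsup
  exact hc S hS S' hS' hSL hSL' (map_injective_of_injective hψ hsup)

variable (K) in
/-- The off-diagonal arrow relation for subspaces: under every coloring of the subspaces of a space
of dimension at least `m`, some color `i` admits a subspace of dimension `k i` all of whose
`t`-dimensional subspaces have color `i`. The space is given as a subspace `H` of an ambient `X`,
so that the relation can be applied to subspaces without changing the ambient type. -/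
def SubspaceArrow (m t : ℕ) (k : κ → ℕ) : Prop :=
  ∀ (X : Type v) [AddCommGroup X] [Module K X] (c : Submodule K X → κ) (H : Submodule K X)
    [FiniteDimensional K H], m ≤ finrank K H →
      ∃ i, ∃ W ≤ H, finrank K W = k i ∧ IsMonochromatic c t W i

theorem SubspaceArrow.mono {m m' t : ℕ} {k : κ → ℕ} (h : SubspaceArrow.{u, v} K m t k)
    (hm : m ≤ m') : SubspaceArrow.{u, v} K m' t k :=
  fun X _ _ c H _ hH => h X c H (hm.trans hH)

/-- The Hales–Jewett theorem over the alphabet `Hom(Kⁿ, K)`: a word is a linear map `Kⁿ → K^ι`, and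
the graphs of the words on a combinatorial line sweep out a copy of `Kⁿ × K`. -/
theorem exists_embedding_color_map_graph_eq [Finite K] [Finite κ] (n : ℕ) :
    ∃ m : ℕ, ∀ (X : Type v) [AddCommGroup X] [Module K X] (c : Submodule K X → κ)
      (H : Submodule K X), m ≤ finrank K H →
      ∃ ψ : (Fin n → K) × K →ₗ[K] X, Function.Injective ψ ∧ LinearMap.range ψ ≤ H ∧
        ∀ (S : Submodule K (Fin n → K)) (a a' : (Fin n → K) →ₗ[K] K),
          c ((S.map (LinearMap.id.prod a)).map ψ) = c ((S.map (LinearMap.id.prod a')).map ψ) := by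
  have : Finite ((Fin n → K) →ₗ[K] K) := Module.finite_of_finite K
  obtain ⟨ι, _, hι⟩ := Combinatorics.Line.exists_mono_in_high_dimension
    ((Fin n → K) →ₗ[K] K) (Submodule K (Fin n → K) → κ)
  refine ⟨n + Fintype.card ι, fun X _ _ c H hH => ?_⟩
  obtain ⟨f, hf, hfH⟩ := exists_injective_linearMap_range_le hH
  let e : ((Fin n → K) × (ι → K)) ≃ₗ[K] (Fin (n + Fintype.card ι) → K) :=
    LinearEquiv.ofFinrankEq _ _ (by simp)
  let φ := f ∘ₗ e.toLinearMap
  have hφ : Function.Injective φ := hf.comp e.injective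
  obtain ⟨l, d, hl⟩ := hι fun f S => c (S.map (φ ∘ₗ LinearMap.id.prod (LinearMap.pi f)))
  let q : (Fin n → K) × K →ₗ[K] (ι → K) :=
    LinearMap.pi fun i => (l.idxFun i).elim (LinearMap.snd K _ _) (· ∘ₗ LinearMap.fst K _ _)
  have hword : ∀ a : (Fin n → K) →ₗ[K] K, q ∘ₗ LinearMap.id.prod a = LinearMap.pi (l a) := by
    refine fun a => LinearMap.ext fun y => funext fun i => ?_
    cases h : l.idxFun i <;> simp [q, h, Combinatorics.Line.apply_def]
  refine ⟨φ ∘ₗ (LinearMap.fst K _ _).prod q, hφ.comp fun x y hxy => ?_, ?_, ?_⟩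
  · obtain ⟨hfst, hq⟩ := Prod.mk.inj hxy
    obtain ⟨i, hi⟩ := l.proper
    exact Prod.ext hfst (by simpa [q, hi] using congrFun hq i)
  · exact ((LinearMap.range_comp_le_range _ _).trans (LinearMap.range_comp_le_range _ _)).trans
      hfH
  · have hcolor : ∀ S a, c ((S.map (LinearMap.id.prod a)).map (φ ∘ₗ (LinearMap.fst K _ _).prod q)) =
        d S := fun S a => by
      rw [← hl a, ← Submodule.map_comp, LinearMap.comp_assoc, LinearMap.prod_comp, hword]
      rfl
    exact fun S a a' => (hcolor S a).trans (hcolor S a').symm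

theorem isColoredModulo_ker_fst {Y Z : Type*} [AddCommGroup Y] [Module K Y] [AddCommGroup Z]
    [Module K Z] {c : Submodule K (Y × Z) → κ}
    (hc : ∀ (S : Submodule K Y) (a a' : Y →ₗ[K] Z),
      c (S.map (LinearMap.id.prod a)) = c (S.map (LinearMap.id.prod a'))) :
    IsColoredModulo c ⊤ (LinearMap.ker (LinearMap.fst K Y Z)) := by
  intro T _ T' _ hT hT' hsup
  have hfst : T.map (LinearMap.fst K Y Z) = T'.map (LinearMap.fst K Y Z) := by
    rw [← comap_map_eq, ← comap_map_eq] at hsup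
    exact comap_injective_of_surjective LinearMap.fst_surjective hsup
  obtain ⟨a, ha⟩ := exists_eq_map_graph_of_disjoint_ker_fst hT
  obtain ⟨a', ha'⟩ := exists_eq_map_graph_of_disjoint_ker_fst hT'
  rw [ha, ha', hfst]
  exact hc _ a a'

theorem exists_isColoredModulo_line [Finite K] [Finite κ] (n : ℕ) :
    ∃ m : ℕ, ∀ (X : Type v) [AddCommGroup X] [Module K X] (c : Submodule K X → κ)
      (H : Submodule K X), m ≤ finrank K H → ∃ Y ≤ H, ∃ L ≤ H, finrank K Y = n ∧
        finrank K L = 1 ∧ Disjoint Y L ∧ IsColoredModulo c (Y ⊔ L) L := by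
  obtain ⟨m, hm⟩ := exists_embedding_color_map_graph_eq (K := K) (κ := κ) n
  refine ⟨m, fun X _ _ c H hH => ?_⟩
  obtain ⟨ψ, hψ, hψH, hcolor⟩ := hm X c H hH
  let Y := LinearMap.range (LinearMap.inl K (Fin n → K) K)
  let L := LinearMap.range (LinearMap.inr K (Fin n → K) K)
  have hYL : IsCompl Y L := LinearMap.isCompl_range_inl_inr
  have hc : IsColoredModulo c ((Y ⊔ L).map ψ) (L.map ψ) := by
    have hL : L = LinearMap.ker (LinearMap.fst K (Fin n → K) K) := (LinearMap.ker_fst K _ _).symm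
    rw [hYL.sup_eq_top, hL]
    exact (isColoredModulo_ker_fst hcolor).map hψ
  refine ⟨Y.map ψ, LinearMap.map_le_range.trans hψH, L.map ψ, LinearMap.map_le_range.trans hψH,
    ?_, ?_, disjoint_map hψ hYL.disjoint, by rwa [← Submodule.map_sup]⟩
  · rw [finrank_map_of_injective hψ, LinearMap.finrank_range_of_inj LinearMap.inl_injective,
      finrank_fin_fun]
  · rw [finrank_map_of_injective hψ, LinearMap.finrank_range_of_inj LinearMap.inr_injective,
      finrank_self]

theorem IsColoredModulo.isMonochromatic_sup {X : Type*} [AddCommGroup X] [Module K X]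
    {c : Submodule K X → κ} {W L : Submodule K X} {t : ℕ} {i : κ} [FiniteDimensional K W]
    (hc : IsColoredModulo c (W ⊔ L) L) (hL : finrank K L = 1) (hWL : Disjoint W L)
    (hbase : IsMonochromatic c (t + 1) W i)
    (hcone : IsMonochromatic (fun U => c (U ⊔ L)) t W i) :
    IsMonochromatic c (t + 1) (W ⊔ L) i := by
  intro U hU hUt
  have : FiniteDimensional K L := Module.finite_of_finrank_eq_succ hL
  have : FiniteDimensional K U := Module.finite_of_finrank_eq_succ hUt
  let T := W ⊓ (U ⊔ L)
  have hTL : T ⊔ L = U ⊔ L := by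
    rw [sup_comm, ← sup_inf_assoc_of_le W le_sup_right, sup_comm L W,
      inf_eq_right.mpr (sup_le hU le_sup_right)]
  have hdisj : Disjoint T L := hWL.mono_left inf_le_left
  have hTrank : finrank K T + 1 = finrank K ↥(U ⊔ L) := by
    rw [← hTL, finrank_sup_of_disjoint hdisj, hL]
  by_cases hLU : L ≤ U
  · rw [sup_eq_left.mpr hLU] at hTL hTrank
    rw [← hTL]
    exact hcone T inf_le_left (by omega)
  · have hUL : Disjoint U L := ((isAtom_iff_finrank_eq_one.mpr hL).not_le_iff_disjoint.mp hLU).symm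
    rw [finrank_sup_of_disjoint hUL, hL, hUt] at hTrank
    rw [← hc T (inf_le_left.trans le_sup_left) U hU hdisj hUL hTL]
    exact hbase T inf_le_left (by omega)

theorem subspaceArrow_zero [Fintype κ] (k : κ → ℕ) : SubspaceArrow.{u, v} K (∑ i, k i) 0 k := by
  intro X _ _ c H _ hH
  have hle : k (c ⊥) ≤ ∑ i, k i := Finset.single_le_sum_of_canonicallyOrdered (Finset.mem_univ _)
  obtain ⟨W, hWH, hW⟩ := exists_le_finrank_eq (hle.trans hH)
  refine ⟨c ⊥, W, hWH, hW, fun U hU hU0 => ?_⟩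
  have := finiteDimensional_of_le (hU.trans hWH)
  rw [finrank_eq_zero.mp hU0]

theorem subspaceArrow_of_lt {t : ℕ} {k : κ → ℕ} {i : κ} (h : k i < t) :
    SubspaceArrow.{u, v} K (k i) t k := by
  intro X _ _ c H _ hH
  obtain ⟨W, hWH, hW⟩ := exists_le_finrank_eq hH
  have := finiteDimensional_of_le hWH
  refine ⟨i, W, hWH, hW, fun U hU hUt => ?_⟩
  have := finrank_mono hU
  omega

/-- To extend a monochromatic `W` of color `i`, the cones `U ⊔ L` over its `t`-dimensional
subspaces are colored first, on a complement of `L`. -/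
theorem exists_subspaceArrow_succ [Finite K] [Finite κ] [DecidableEq κ] {t M N : ℕ} {k : κ → ℕ}
    (hk : ∀ i, k i ≠ 0) (hM : ∀ i, SubspaceArrow.{u, v} K M (t + 1) (Function.update k i (k i - 1)))
    (hN : SubspaceArrow.{u, v} K N t fun _ : κ => M) :
    ∃ m, SubspaceArrow.{u, v} K m (t + 1) k := by
  obtain ⟨m, hm⟩ := exists_isColoredModulo_line (K := K) (κ := κ) N
  refine ⟨m, fun X _ _ c H _ hH => ?_⟩
  obtain ⟨Y, hYH, L, hLH, hY, hL, hYL, hc⟩ := hm X c H hH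
  have := finiteDimensional_of_le hYH
  have := finiteDimensional_of_le hLH
  obtain ⟨i, Z, hZY, hZ, hcone⟩ := hN X (fun U => c (U ⊔ L)) Y hY.ge
  have := finiteDimensional_of_le hZY
  obtain ⟨j, W, hWZ, hW, hbase⟩ := hM i X c Z hZ.ge
  have := finiteDimensional_of_le hWZ
  have hWY := hWZ.trans hZY
  obtain rfl | hji := eq_or_ne j i
  · have hWL : Disjoint W L := hYL.mono_left hWY
    refine ⟨j, W ⊔ L, sup_le (hWY.trans hYH) hLH, ?_, ?_⟩
    · rw [finrank_sup_of_disjoint hWL, hW, hL, Function.update_self]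
      have := hk j
      omega
    · exact (hc.mono (sup_le_sup_right hWY L)).isMonochromatic_sup hL hWL hbase
        fun U hU => hcone U (hU.trans hWZ)
  · exact ⟨j, W, hWY.trans hYH, by rw [hW, Function.update_of_ne hji], hbase⟩

/-- The **Graham–Leeb–Rothschild theorem** for subspaces over a finite field. -/
theorem exists_subspaceArrow [Finite K] [Finite κ] (t : ℕ) (k : κ → ℕ) :
    ∃ m, SubspaceArrow.{u, v} K m t k := by
  classical
  have := Fintype.ofFinite κ
  induction t generalizing k with
  | zero => exact ⟨_, subspaceArrow_zero k⟩
  | succ t ih =>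
    induction hs : ∑ i, k i using Nat.strong_induction_on generalizing k with
    | _ s ihs =>
    by_cases hk : ∃ i, k i = 0
    · obtain ⟨i, hi⟩ := hk
      exact ⟨k i, subspaceArrow_of_lt (by omega)⟩
    push Not at hk
    have hlt : ∀ i, ∑ j, Function.update k i (k i - 1) j < s := fun i => by
      have hpred : k i - 1 < k i := Nat.pred_lt (hk i)
      rw [← hs]
      exact Fintype.sum_strictMono (update_lt_self_iff.mpr hpred)
    choose M hM using fun i => ihs _ (hlt i) _ rfl
    obtain ⟨N, hN⟩ := ih fun _ => ∑ i, M i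
    exact exists_subspaceArrow_succ hk (fun i => (hM i).mono
      (Finset.single_le_sum_of_canonicallyOrdered (Finset.mem_univ i))) hN

end SubspaceRamsey

section CosetGraph

variable {K X E : Type*} [Field K] [AddCommGroup X] [Module K X] [AddCommGroup E] [Module K E]

/-- The union of the sets `(U + f e) × {e}`. For a basis `b` of `E`, it encodes the tuple of cosets
`U + f (b i)` as a subspace of `X × E`. -/
def cosetGraph (U : Submodule K X) (f : E →ₗ[K] X) : Submodule K (X × E) :=
  U.comap (LinearMap.fst K X E - f ∘ₗ LinearMap.snd K X E)

theorem mem_cosetGraph {U : Submodule K X} {f : E →ₗ[K] X} {z : X × E} :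
    z ∈ cosetGraph U f ↔ z.1 - f z.2 ∈ U :=
  Iff.rfl

theorem comap_inl_cosetGraph (U : Submodule K X) (f : E →ₗ[K] X) :
    (cosetGraph U f).comap (LinearMap.inl K X E) = U := by
  ext x
  simp [mem_cosetGraph]

theorem map_snd_cosetGraph (U : Submodule K X) (f : E →ₗ[K] X) :
    (cosetGraph U f).map (LinearMap.snd K X E) = ⊤ :=
  eq_top_iff.mpr fun e _ => ⟨(f e, e), by simp [mem_cosetGraph], rfl⟩

theorem finrank_comap_inl_add_finrank [FiniteDimensional K X] [FiniteDimensional K E]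
    {T : Submodule K (X × E)} (hT : T.map (LinearMap.snd K X E) = ⊤) :
    finrank K (T.comap (LinearMap.inl K X E)) + finrank K E = finrank K T := by
  have hker : LinearMap.ker (LinearMap.snd K X E ∘ₗ T.subtype) =
      (T ⊓ LinearMap.range (LinearMap.inl K X E)).comap T.subtype := by
    simp [LinearMap.ker_comp, LinearMap.ker_snd]
  rw [← LinearMap.finrank_range_add_finrank_ker (LinearMap.snd K X E ∘ₗ T.subtype), hker,
    (comapSubtypeEquivOfLe inf_le_left).finrank_eq, inf_comm, ← Submodule.map_comap_eq,
    finrank_map_of_injective LinearMap.inl_injective, LinearMap.range_comp, range_subtype, hT,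
    finrank_top, add_comm]

theorem finrank_cosetGraph [FiniteDimensional K X] [FiniteDimensional K E] (U : Submodule K X)
    (f : E →ₗ[K] X) : finrank K (cosetGraph U f) = finrank K U + finrank K E := by
  rw [← finrank_comap_inl_add_finrank (map_snd_cosetGraph U f), comap_inl_cosetGraph]

theorem cosetGraph_le_iff {U W : Submodule K X} {f g : E →ₗ[K] X} :
    cosetGraph U f ≤ cosetGraph W g ↔ U ≤ W ∧ ∀ e, f e - g e ∈ W := by
  refine ⟨fun h => ⟨fun x hx => ?_, fun e => ?_⟩, fun ⟨hUW, hfg⟩ z hz => ?_⟩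
  · have hxW : ((x, 0) : X × E) ∈ cosetGraph W g := h (by simpa [mem_cosetGraph] using hx)
    simpa [mem_cosetGraph] using hxW
  · exact h (x := (f e, e)) (by simp [mem_cosetGraph])
  · have hzW := W.add_mem (hUW hz) (hfg z.2)
    rwa [LinearMap.sub_apply, LinearMap.comp_apply, LinearMap.fst_apply, LinearMap.snd_apply,
      sub_add_sub_cancel] at hzW

theorem exists_eq_cosetGraph {T : Submodule K (X × E)} (hT : T.map (LinearMap.snd K X E) = ⊤) :
    ∃ f : E →ₗ[K] X, T = cosetGraph (T.comap (LinearMap.inl K X E)) f := by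
  obtain ⟨g, hg⟩ := LinearMap.exists_rightInverse_of_surjective
    (LinearMap.snd K X E ∘ₗ T.subtype) (by rw [LinearMap.range_comp, range_subtype, hT])
  refine ⟨LinearMap.fst K X E ∘ₗ T.subtype ∘ₗ g, ext fun z => ?_⟩
  have hgz : z = ((g z.2 : X × E).1, z.2) + (z.1 - (g z.2 : X × E).1, 0) := by simp
  have hsnd : (g z.2 : X × E).2 = z.2 := LinearMap.congr_fun hg z.2
  have hgT : ((g z.2 : X × E).1, z.2) ∈ T := by
    conv => enter [2, 2]; rw [← hsnd]
    exact (g z.2).2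
  conv_lhs => rw [hgz, T.add_mem_iff_right hgT]
  rfl

end CosetGraph

section SpaceTuple

variable {X E : Type*} [AddCommGroup X] [Module (ZMod 2) X] [AddCommGroup E] [Module (ZMod 2) E]
  {n : ℕ}

theorem coset_subset_coset {U W : Submodule (ZMod 2) X} {v w : X} (hUW : U ≤ W)
    (hvw : v - w ∈ W) : coset U v ⊆ coset W w := fun x hx => by
  have hxW := W.add_mem (hUW hx) hvw
  rwa [sub_add_sub_cancel] at hxW

theorem IsSpaceTuple.of_le {U W : Submodule (ZMod 2) X} {v w : Fin n → X}
    (hw : IsSpaceTuple W w) (hUW : U ≤ W) (hvw : ∀ i, v i - w i ∈ W) : IsSpaceTuple U v := by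
  refine LinearIndependent.of_comp (mapQ U W LinearMap.id hUW) ?_
  have hmk : mapQ U W LinearMap.id hUW ∘ (fun i => Submodule.Quotient.mk (v i)) =
      fun i => (Submodule.Quotient.mk (w i) : X ⧸ W) :=
    funext fun i => (Submodule.Quotient.eq W).mpr (hvw i)
  rwa [hmk]

theorem span_iUnion_image_coset [NeZero n] (b : Basis (Fin n) (ZMod 2) E)
    (U : Submodule (ZMod 2) X) (f : E →ₗ[ZMod 2] X) :
    span (ZMod 2) (⋃ i, (fun x => (x, b i)) '' coset U (f (b i))) = cosetGraph U f := by
  set S := span (ZMod 2) (⋃ i, (fun x => (x, b i)) '' coset U (f (b i)))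
  have hcoset : ∀ i, ∀ u ∈ U, (u + f (b i), b i) ∈ S := fun i u hu =>
    subset_span (Set.mem_iUnion.mpr ⟨i, _, by simpa [coset] using hu, rfl⟩)
  have hU : U.map (LinearMap.inl (ZMod 2) X E) ≤ S := by
    rintro _ ⟨u, hu, rfl⟩
    simpa using S.sub_mem (hcoset 0 u hu) (hcoset 0 0 U.zero_mem)
  have hf : LinearMap.range (f.prod LinearMap.id) ≤ S := by
    rw [LinearMap.range_eq_map, ← b.span_eq, map_span_le]
    rintro _ ⟨i, rfl⟩
    simpa using hcoset i 0 U.zero_mem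
  refine le_antisymm (span_le.mpr (Set.iUnion_subset fun i => ?_)) fun z hz => ?_
  · rintro _ ⟨x, hx, rfl⟩
    exact hx
  · have hsum := S.add_mem (hU ⟨_, hz, rfl⟩) (hf ⟨z.2, rfl⟩)
    simpa using hsum

theorem IsSpaceTuple.exists_eq_span_iUnion_image_coset [NeZero n] [FiniteDimensional (ZMod 2) X]
    (b : Basis (Fin n) (ZMod 2) E) {W : Submodule (ZMod 2) X} {w : Fin n → X}
    (hw : IsSpaceTuple W w) {T : Submodule (ZMod 2) (X × E)}
    (hT : T ≤ cosetGraph W (b.constr (ZMod 2) w)) (hTE : T.map (LinearMap.snd _ _ _) = ⊤) :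
    ∃ (U : Submodule (ZMod 2) X) (v : Fin n → X), finrank (ZMod 2) U + n = finrank (ZMod 2) T ∧
      IsSpaceTuple U v ∧ (∀ i, coset U (v i) ⊆ coset W (w i)) ∧
      span (ZMod 2) (⋃ i, (fun x => (x, b i)) '' coset U (v i)) = T := by
  have : FiniteDimensional (ZMod 2) E := b.finiteDimensional_of_finite
  obtain ⟨f, hf⟩ := exists_eq_cosetGraph hTE
  obtain ⟨hUW, hfg⟩ := cosetGraph_le_iff.mp (hf ▸ hT)
  have hfw : ∀ i, f (b i) - w i ∈ W := fun i => by simpa using hfg (b i)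
  refine ⟨_, fun i => f (b i), ?_, hw.of_le hUW hfw, fun i => coset_subset_coset hUW (hfw i),
    (span_iUnion_image_coset b _ f).trans hf.symm⟩
  rw [← finrank_comap_inl_add_finrank hTE, finrank_eq_card_basis b, Fintype.card_fin]

end SpaceTuple

section MonochromaticOnto

variable {K Y Y' E E' κ : Type*} [Field K] [AddCommGroup Y] [Module K Y] [AddCommGroup Y']
  [Module K Y'] [AddCommGroup E] [Module K E] [AddCommGroup E'] [Module K E']

/-- The `d`-dimensional subspaces of `B` with the same image under `p` as the whole space have the
same color under `c`. -/
def IsMonochromaticOnto (p : Y →ₗ[K] E) (c : Submodule K Y → κ) (d : ℕ) (B : Submodule K Y) :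
    Prop :=
  ∀ U U' : Submodule K Y,
    U ≤ B → U.map p = LinearMap.range p → finrank K U = d →
    U' ≤ B → U'.map p = LinearMap.range p → finrank K U' = d → c U = c U'

theorem IsMonochromaticOnto.map {p : Y →ₗ[K] E} {p' : Y' →ₗ[K] E'} {φ : Y →ₗ[K] Y'}
    {ι : E →ₗ[K] E'} (hφ : Function.Injective φ) (hι : Function.Injective ι)
    (hcomm : p' ∘ₗ φ = ι ∘ₗ p) (hrange : LinearMap.range p' = (LinearMap.range p).map ι)
    {c : Submodule K Y' → κ} {d : ℕ} {B : Submodule K Y}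
    (h : IsMonochromaticOnto p (fun U => c (U.map φ)) d B) :
    IsMonochromaticOnto p' c d (B.map φ) := by
  have hlift : ∀ U ≤ B.map φ, U.map p' = LinearMap.range p' → finrank K U = d →
      ∃ S ≤ B, S.map p = LinearMap.range p ∧ finrank K S = d ∧ S.map φ = U := by
    intro U hU hUp hUd
    have hmap : (U.comap φ).map φ = U := map_comap_eq_self (hU.trans LinearMap.map_le_range)
    refine ⟨U.comap φ, ?_, map_injective_of_injective hι ?_, ?_, hmap⟩
    · rwa [← map_le_map_iff_of_injective hφ, hmap]
    · rw [← Submodule.map_comp, ← hcomm, Submodule.map_comp, hmap, hUp, hrange]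
    · rw [← finrank_map_of_injective hφ, hmap, hUd]
  intro U U' hU hUp hUd hU' hUp' hUd'
  obtain ⟨S, hS, hSp, hSd, rfl⟩ := hlift U hU hUp hUd
  obtain ⟨S', hS', hSp', hSd', rfl⟩ := hlift U' hU' hUp' hUd'
  exact h S S' hS hSp hSd hS' hSp' hSd'

theorem isMonochromaticOnto_of_finrank_le {p : Y →ₗ[K] E} (c : Submodule K Y → κ) {d : ℕ}
    {B : Submodule K Y} [FiniteDimensional K B]
    (h : finrank K B ≤ max d (finrank K (LinearMap.range p))) : IsMonochromaticOnto p c d B := by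
  have heq : ∀ U ≤ B, U.map p = LinearMap.range p → finrank K U = d → U = B := by
    intro U hU hUp hUd
    have := finiteDimensional_of_le hU
    have hrange := finrank_map_le p U
    rw [hUp, hUd] at hrange
    exact eq_of_le_of_finrank_le hU (by rwa [hUd, ← max_eq_left hrange])
  intro U U' hU hUp hUd hU' hUp' hUd'
  rw [heq U hU hUp hUd, heq U' hU' hUp' hUd']

end MonochromaticOnto

section OntoArrow

/-- The arrow relation for subspaces of `Kᵐ × E` projecting onto `E`: under every `r`-coloring of
subspaces there is a `k`-dimensional such subspace all of whose `d`-dimensional subspaces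
projecting onto `E` have the same color. -/
def OntoArrow (K E : Type*) [Field K] [AddCommGroup E] [Module K E] (m d k r : ℕ) : Prop :=
  ∀ c : Submodule K ((Fin m → K) × E) → Fin r,
    ∃ B : Submodule K ((Fin m → K) × E),
      B.map (LinearMap.snd K (Fin m → K) E) = ⊤ ∧ finrank K B = k ∧
        IsMonochromaticOnto (LinearMap.snd K (Fin m → K) E) c d B

theorem exists_ontoArrow_of_subsingleton {K E : Type*} [Field K] [Finite K] [AddCommGroup E]
    [Module K E] [Subsingleton E] (d k r : ℕ) : ∃ m, OntoArrow K E m d k r := by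
  obtain ⟨m, hm⟩ := exists_subspaceArrow (K := K) d fun _ : Fin r => k
  refine ⟨m, fun c => ?_⟩
  obtain ⟨i, B, -, hB, hmono⟩ := hm _ c ⊤ (by simp)
  refine ⟨B, Subsingleton.elim _ _, hB, fun U U' hU _ hUd hU' _ hUd' => ?_⟩
  rw [hmono U hU hUd, hmono U' hU' hUd']

theorem ontoArrow_of_le_max {K E : Type*} [Field K] [AddCommGroup E] [Module K E]
    [FiniteDimensional K E] {d k : ℕ} (hEk : finrank K E ≤ k) (hkd : k ≤ max d (finrank K E))
    (r : ℕ) : OntoArrow K E (k - finrank K E) d k r := by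
  intro c
  have htop : finrank K (⊤ : Submodule K ((Fin (k - finrank K E) → K) × E)) = k := by
    rw [finrank_top, finrank_prod, finrank_fin_fun, Nat.sub_add_cancel hEk]
  refine ⟨⊤, by rw [Submodule.map_top, range_snd], htop,
    isMonochromaticOnto_of_finrank_le c ?_⟩
  rwa [htop, range_snd, finrank_top]

theorem exists_ontoArrow_of_tupleRamsey {E : Type*} [AddCommGroup E] [Module (ZMod 2) E]
    [FiniteDimensional (ZMod 2) E] [Nontrivial E] (htuple : TupleRamsey (finrank (ZMod 2) E))
    {d k : ℕ} (hdk : d < k) (hEk : finrank (ZMod 2) E < k) (r : ℕ) :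
    ∃ m, OntoArrow (ZMod 2) E m d k r := by
  have : NeZero (finrank (ZMod 2) E) := ⟨finrank_pos.ne'⟩
  let b := finBasis (ZMod 2) E
  obtain ⟨m, hm⟩ := htuple (d - finrank (ZMod 2) E) (k - finrank (ZMod 2) E) r (by omega)
  refine ⟨m, fun c => ?_⟩
  obtain ⟨W, w, hW, hw, hmono⟩ := hm (Fin m → ZMod 2) (by simp) fun S =>
    c (span (ZMod 2) (⋃ i, (fun x => (x, b i)) '' S i))
  refine ⟨cosetGraph W (b.constr (ZMod 2) w), map_snd_cosetGraph W _,
    by rw [finrank_cosetGraph]; omega, fun U U' hU hUE hUd hU' hUE' hUd' => ?_⟩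
  rw [range_snd] at hUE hUE'
  obtain ⟨U₀, v, hd, hv, hsub, rfl⟩ := hw.exists_eq_span_iUnion_image_coset b hU hUE
  obtain ⟨U₀', v', hd', hv', hsub', rfl⟩ := hw.exists_eq_span_iUnion_image_coset b hU' hUE'
  exact hmono U₀ v U₀' v' (by omega) hv (by omega) hv' hsub hsub'

theorem exists_ontoArrow {E : Type*} [AddCommGroup E] [Module (ZMod 2) E]
    [FiniteDimensional (ZMod 2) E] (htuple : TupleRamsey (finrank (ZMod 2) E)) (d r : ℕ) {k : ℕ}
    (hEk : finrank (ZMod 2) E ≤ k) : ∃ m, OntoArrow (ZMod 2) E m d k r := by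
  rcases subsingleton_or_nontrivial E with _ | _
  · exact exists_ontoArrow_of_subsingleton d k r
  · rcases le_or_gt k (max d (finrank (ZMod 2) E)) with hk | hk
    · exact ⟨_, ontoArrow_of_le_max hEk hk r⟩
    · obtain ⟨hdk, hEk⟩ := max_lt_iff.mp hk
      exact exists_ontoArrow_of_tupleRamsey htuple hdk hEk r

end OntoArrow

section Splitting

variable {K V E : Type*} [Field K] [AddCommGroup V] [Module K V] [AddCommGroup E] [Module K E]

theorem aleph0_le_rank_ker (hV : Cardinal.aleph0 ≤ Module.rank K V) (π : V →ₗ[K] E)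
    [FiniteDimensional K (LinearMap.range π)] :
    Cardinal.aleph0 ≤ Module.rank K (LinearMap.ker π) := by
  by_contra! hker
  have : FiniteDimensional K (V ⧸ LinearMap.ker π) := Module.Finite.equiv π.quotKerEquivRange.symm
  refine (Cardinal.add_lt_aleph0 (rank_lt_aleph0 K (V ⧸ LinearMap.ker π)) hker).not_ge ?_
  rwa [rank_quotient_add_rank]

theorem exists_injective_comp_eq_subtype_comp_snd (hV : Cardinal.aleph0 ≤ Module.rank K V)
    (π : V →ₗ[K] E) [FiniteDimensional K (LinearMap.range π)] (m : ℕ) :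
    ∃ φ : (Fin m → K) × LinearMap.range π →ₗ[K] V, Function.Injective φ ∧
      π ∘ₗ φ = (LinearMap.range π).subtype ∘ₗ LinearMap.snd K _ _ := by
  obtain ⟨j, hj⟩ := Module.le_rank_iff_exists_linearMap.mp
    (Cardinal.natCast_lt_aleph0.le.trans (aleph0_le_rank_ker hV π) : (m : Cardinal) ≤ _)
  obtain ⟨s, hs⟩ := π.rangeRestrict.exists_rightInverse_of_surjective π.range_rangeRestrict
  have hπφ : π ∘ₗ ((LinearMap.ker π).subtype ∘ₗ j).coprod s =
      (LinearMap.range π).subtype ∘ₗ LinearMap.snd K _ _ := by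
    refine LinearMap.prod_ext (LinearMap.ext fun x => ?_) (LinearMap.ext fun e => ?_)
    · simp
    · simpa using congrArg Subtype.val (LinearMap.congr_fun hs e)
  refine ⟨_, (injective_iff_map_eq_zero _).mpr fun z hz => ?_, hπφ⟩
  have hz₂ : z.2 = 0 := by simpa [hz, eq_comm] using LinearMap.congr_fun hπφ z
  have hz₁ : z.1 = 0 := by simpa [hz₂, map_eq_zero_iff j hj] using hz
  exact Prod.ext hz₁ hz₂

end Splitting

theorem ramsey_for_K_A1_from_tuple_ramsey_general {V E : Type*} [AddCommGroup V]
    [Module (ZMod 2) V] [AddCommGroup E] [Module (ZMod 2) E]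
    (hV : Cardinal.aleph0 ≤ Module.rank (ZMod 2) V) (π : V →ₗ[ZMod 2] E)
    [FiniteDimensional (ZMod 2) (LinearMap.range π)]
    (htuple : TupleRamsey (finrank (ZMod 2) (LinearMap.range π))) (d r : ℕ) {k : ℕ}
    (hk : finrank (ZMod 2) (LinearMap.range π) ≤ k) :
    ∃ C : Submodule (ZMod 2) V, FiniteDimensional (ZMod 2) C ∧ C.map π = LinearMap.range π ∧
      ∀ ξ : Submodule (ZMod 2) V → Fin r, ∃ B ≤ C, B.map π = LinearMap.range π ∧
        finrank (ZMod 2) B = k ∧ IsMonochromaticOnto π ξ d B := by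
  obtain ⟨m, hm⟩ := exists_ontoArrow htuple d r hk
  obtain ⟨φ, hφ, hπφ⟩ := exists_injective_comp_eq_subtype_comp_snd hV π m
  have hmap : ∀ S : Submodule (ZMod 2) _, S.map (LinearMap.snd _ _ _) = ⊤ →
      (S.map φ).map π = LinearMap.range π := fun S hS => by
    rw [← Submodule.map_comp, hπφ, Submodule.map_comp, hS, map_subtype_top]
  refine ⟨LinearMap.range φ, inferInstance,
    φ.range_eq_map ▸ hmap ⊤ (by rw [Submodule.map_top, range_snd]), fun ξ => ?_⟩
  obtain ⟨B, hB, hBk, hmono⟩ := hm fun U => ξ (U.map φ)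
  refine ⟨B.map φ, LinearMap.map_le_range, hmap B hB, by rw [finrank_map_of_injective hφ, hBk],
    hmono.map hφ (injective_subtype _) hπφ ?_⟩
  rw [range_snd, map_subtype_top]

/-- Assuming the `n`-space-tuple Ramsey theorem for `n = dim A1`, the family `K_{A1}` of
finite dimensional subspaces `U` of `V` with `π(U) = A1` (where `π` is an idempotent
linear map with image `A1`) has the Ramsey property with respect to copies of `A` in
copies of `B ∈ K_{A1}`, whenever `A1 < A ≤ B`. -/
theorem ramsey_for_K_A1_from_tuple_ramsey
    (V : Type*) [AddCommGroup V] [Module (ZMod 2) V]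
    (hrank : Module.rank (ZMod 2) V = Cardinal.aleph0)
    (π : V →ₗ[ZMod 2] V) (hidem : π ∘ₗ π = π)
    (A1 : Submodule (ZMod 2) V) (hA1 : LinearMap.range π = A1)
    (hA1fin : FiniteDimensional (ZMod 2) A1)
    (htuple : TupleRamsey (finrank (ZMod 2) A1))
    (A : Submodule (ZMod 2) V)
    (hAfin : FiniteDimensional (ZMod 2) A)
    (hA1A : A1 < A)
    (r : ℕ) (B : Submodule (ZMod 2) V)
    (hBfin : FiniteDimensional (ZMod 2) B)
    (hBK : Submodule.map π B = A1)
    (hAB : A ≤ B) :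
    ∃ C : Submodule (ZMod 2) V,
      FiniteDimensional (ZMod 2) C ∧ Submodule.map π C = A1 ∧
      ∀ ξ : Submodule (ZMod 2) V → Fin r,
        ∃ B' : Submodule (ZMod 2) V,
          B' ≤ C ∧ Submodule.map π B' = A1 ∧
          finrank (ZMod 2) B' = finrank (ZMod 2) B ∧
          ∀ U U' : Submodule (ZMod 2) V,
            U ≤ B' → Submodule.map π U = A1 → finrank (ZMod 2) U = finrank (ZMod 2) A →
            U' ≤ B' → Submodule.map π U' = A1 → finrank (ZMod 2) U' = finrank (ZMod 2) A →
            ξ U = ξ U' := by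
  subst hA1
  exact ramsey_for_K_A1_from_tuple_ramsey_general hrank.ge π htuple _ r
    (hBK ▸ finrank_map_le π B)
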